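/- (BSGS form of the depth-optimized PCMM) Let d > 0 and let g, b be positive integers with g·b = d. For every integer ℓ ≥ 0 and all matrices A, B ∈ ℝ^{d×d} (indices modulo d), the product C = A·B satisfies τ^ℓ(C) = Σ_{j=0}^{g-1} Rot_row^{j·b}( Σ_{i=0}^{b-1} A_{i,j,ℓ} ⊙ Rot_row^i(τ^{ℓ+1}(B)) ), where A_{i,j,ℓ} = Rot_row^{-ℓ·(i+j·b) - j·b}(Rot_col^{i+j·b}(τ^ℓ(σ(A)))). -/

import Mathlib

/-- Row rotation: `(RotRow k M) i j = M (i+k) j`, indices modulo `d`. -/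
def RotRow (d : ℕ) (k : ℤ) (M : Matrix (ZMod d) (ZMod d) ℝ) :
    Matrix (ZMod d) (ZMod d) ℝ :=
  fun i j => M (i + (k : ZMod d)) j

/-- Column rotation: `(RotCol k M) i j = M i (j+k)`, indices modulo `d`. -/
def RotCol (d : ℕ) (k : ℤ) (M : Matrix (ZMod d) (ZMod d) ℝ) :
    Matrix (ZMod d) (ZMod d) ℝ :=
  fun i j => M i (j + (k : ZMod d))

/-- The permutation `τ`: `(tau M) i j = M (i+j) j`, indices modulo `d`. -/
def tau (d : ℕ) (M : Matrix (ZMod d) (ZMod d) ℝ) :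
    Matrix (ZMod d) (ZMod d) ℝ :=
  fun i j => M (i + j) j

/-- The permutation `σ`: `(sigma M) i j = M i (i+j)`, indices modulo `d`. -/
def sigma (d : ℕ) (M : Matrix (ZMod d) (ZMod d) ℝ) :
    Matrix (ZMod d) (ZMod d) ℝ :=
  fun i j => M i (i + j)

/-- The rearranged plaintext matrix
`A_{i,j,ℓ} = Rot_row^{-ℓ(i+jb)-jb}(Rot_col^{i+jb}(τ^ℓ(σ(A))))`. -/
def ptA (d b : ℕ) (A : Matrix (ZMod d) (ZMod d) ℝ) (i j ℓ : ℕ) :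
    Matrix (ZMod d) (ZMod d) ℝ :=
  RotRow d (-((ℓ : ℤ) * ((i : ℤ) + (j : ℤ) * b)) - (j : ℤ) * b)
    (RotCol d ((i : ℤ) + (j : ℤ) * b) ((tau d)^[ℓ] (sigma d A)))

/-!
Entry `(r, c)` of `τ^ℓ(A * B)` is `∑ k, A (r + ℓc) k * B k c`. Shifting the summation index by
`r + (ℓ + 1)c` turns the `k`-th summand into the `(r, c)` entry of a Hadamard product of rotated
copies of `τ^ℓ(σ(A))` and `τ^{ℓ+1}(B)`. Writing `k = i + jb` with `i < b` and `j < g`, the rotation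
by `jb` is common to all summands with the same `j` and can be carried out after the sum over `i`.
-/

open scoped Matrix

section Sums

variable {M : Type*} [AddCommMonoid M]

theorem sum_range_mul (f : ℕ → M) (m n : ℕ) :
    ∑ k ∈ Finset.range (m * n), f k =
      ∑ j ∈ Finset.range m, ∑ i ∈ Finset.range n, f (i + j * n) := by
  induction m with
  | zero => simp
  | succ m ih =>
    rw [Nat.succ_mul, Finset.sum_range_add, Finset.sum_range_succ, ih]
    simp only [add_comm (m * n)]

theorem sum_range_natCast_zmod (d : ℕ) [NeZero d] (f : ZMod d → M) :
    ∑ k ∈ Finset.range d, f k = ∑ x, f x :=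
  Finset.sum_nbij' (fun k ↦ (k : ZMod d)) ZMod.val (by simp) (by simp [ZMod.val_lt])
    (fun _ hk ↦ ZMod.val_cast_of_lt (Finset.mem_range.mp hk))
    (fun x _ ↦ ZMod.natCast_zmod_val x) (by simp)

end Sums

section Rotations

variable {d : ℕ}

theorem rotRow_rotRow (k l : ℤ) (M : Matrix (ZMod d) (ZMod d) ℝ) :
    RotRow d k (RotRow d l M) = RotRow d (k + l) M := by
  ext r c
  simp only [RotRow, Int.cast_add, add_assoc]

theorem rotRow_hadamard (k : ℤ) (M N : Matrix (ZMod d) (ZMod d) ℝ) :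
    RotRow d k (M ⊙ N) = RotRow d k M ⊙ RotRow d k N :=
  rfl

theorem rotRow_sum {ι : Type*} (k : ℤ) (s : Finset ι) (M : ι → Matrix (ZMod d) (ZMod d) ℝ) :
    RotRow d k (∑ i ∈ s, M i) = ∑ i ∈ s, RotRow d k (M i) := by
  ext r c
  simp only [RotRow, Matrix.sum_apply]

theorem iterate_tau_apply (ℓ : ℕ) (M : Matrix (ZMod d) (ZMod d) ℝ) (r c : ZMod d) :
    (tau d)^[ℓ] M r c = M (r + ℓ * c) c := by
  induction ℓ generalizing r with
  | zero => simp
  | succ ℓ ih =>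
    rw [Function.iterate_succ_apply', tau, ih]
    congr 1
    push_cast
    ring

end Rotations

section Pcmm

variable {d : ℕ}

/-- The `k`-th summand `Rot_row^{-ℓk}(Rot_col^k(τ^ℓ(σ(A)))) ⊙ Rot_row^k(τ^{ℓ+1}(B))` of the
depth-optimized PCMM before its baby-step giant-step regrouping. The index `k` is an integer, like
the rotation amounts, but the summand depends only on `k` modulo `d`. -/
def pcmmTerm (ℓ : ℕ) (A B : Matrix (ZMod d) (ZMod d) ℝ) (k : ℤ) :
    Matrix (ZMod d) (ZMod d) ℝ :=
  RotRow d (-(ℓ * k)) (RotCol d k ((tau d)^[ℓ] (sigma d A))) ⊙ RotRow d k ((tau d)^[ℓ + 1] B)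

theorem pcmmTerm_apply (ℓ : ℕ) (A B : Matrix (ZMod d) (ZMod d) ℝ) (k : ℤ) (r c : ZMod d) :
    pcmmTerm ℓ A B k r c =
      A (r + ℓ * c) (k + (r + (ℓ + 1) * c)) * B (k + (r + (ℓ + 1) * c)) c := by
  simp only [pcmmTerm, Matrix.hadamard_apply, RotRow, RotCol, iterate_tau_apply, sigma]
  push_cast
  congr 2 <;> ring

theorem iterate_tau_mul_eq_sum_pcmmTerm [NeZero d] (ℓ : ℕ) (A B : Matrix (ZMod d) (ZMod d) ℝ) :
    (tau d)^[ℓ] (A * B) = ∑ k ∈ Finset.range d, pcmmTerm ℓ A B k := by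
  ext r c
  let summand (x : ZMod d) : ℝ := A (r + ℓ * c) x * B x c
  let shift : ZMod d := r + (ℓ + 1) * c
  calc (tau d)^[ℓ] (A * B) r c
      = ∑ x, summand x := by rw [iterate_tau_apply, Matrix.mul_apply]
    _ = ∑ x, summand (x + shift) := (Equiv.sum_comp (Equiv.addRight shift) summand).symm
    _ = ∑ k ∈ Finset.range d, summand (k + shift) :=
        (sum_range_natCast_zmod d fun x ↦ summand (x + shift)).symm
    _ = (∑ k ∈ Finset.range d, pcmmTerm ℓ A B k) r c := by
        simp only [Matrix.sum_apply, pcmmTerm_apply, Int.cast_natCast, summand, shift]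

theorem rotRow_ptA_hadamard (b ℓ i j : ℕ) (A B : Matrix (ZMod d) (ZMod d) ℝ) :
    RotRow d (j * b) (ptA d b A i j ℓ ⊙ RotRow d i ((tau d)^[ℓ + 1] B)) =
      pcmmTerm ℓ A B (i + j * b) := by
  rw [rotRow_hadamard, ptA, rotRow_rotRow, rotRow_rotRow, add_sub_cancel, add_comm (j * b : ℤ) i,
    pcmmTerm]

end Pcmm

/-- The BSGS form of the depth-optimized PCMM:
`τ^ℓ(A·B) = Σ_{j<g} Rot_row^{jb}(Σ_{i<b} A_{i,j,ℓ} ⊙ Rot_row^i(τ^{ℓ+1}(B)))`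
whenever `g·b = d`. -/
theorem bsgs_pcmm (d g b : ℕ) [NeZero d] (hg : 0 < g) (hb : 0 < b)
    (hgb : g * b = d) (ℓ : ℕ) (A B : Matrix (ZMod d) (ZMod d) ℝ) :
    (tau d)^[ℓ] (A * B) = ∑ j ∈ Finset.range g,
      RotRow d ((j : ℤ) * b)
        (∑ i ∈ Finset.range b,
          Matrix.hadamard (ptA d b A i j ℓ) (RotRow d (i : ℤ) ((tau d)^[ℓ + 1] B))) := by
  calc (tau d)^[ℓ] (A * B)
      = ∑ k ∈ Finset.range (g * b), pcmmTerm ℓ A B k := by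
        rw [hgb, iterate_tau_mul_eq_sum_pcmmTerm]
    _ = ∑ j ∈ Finset.range g, ∑ i ∈ Finset.range b, pcmmTerm ℓ A B (i + j * b) := by
        simp only [sum_range_mul, Nat.cast_add, Nat.cast_mul]
    _ = _ := by simp only [rotRow_sum, rotRow_ptA_hadamard]
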